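/- Let ψ be a Cartan–Hadamard model function satisfying ∫₀^∞ Θ(s)^{1/(p−1)} ds < +∞ (p-stochastic incompleteness). Then every global radial solution u is strictly decreasing on (0,∞) and converges, as r → +∞, to a strictly positive limit λ > 0. -/

import Mathlib

open Real Filter MeasureTheory
open scoped ENNReal Topology

/-- The volume-to-surface ratio `Θ(r) = (∫₀ʳ ψ(s)^{n-1} ds) / ψ(r)^{n-1}`. -/
noncomputable def Theta (n : ℕ) (ψ : ℝ → ℝ) (r : ℝ) : ℝ :=
  (∫ s in (0:ℝ)..r, ψ s ^ (n - 1)) / ψ r ^ (n - 1)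

/-- A Cartan–Hadamard model function: smooth, `ψ(0)=0`, `ψ'(0)=1`, convex on `[0,∞)`,
positive on `(0,∞)`. -/
def IsCHModel (ψ : ℝ → ℝ) : Prop :=
  ContDiff ℝ (⊤ : ℕ∞) ψ ∧ ψ 0 = 0 ∧ deriv ψ 0 = 1 ∧
    (∀ r : ℝ, 0 ≤ r → 0 ≤ deriv (deriv ψ) r) ∧ (∀ r : ℝ, 0 < r → 0 < ψ r)

/-- A radial solution on `[0,T)` (with `T ∈ (0,∞]`) with initial datum `α`:
`u ∈ C¹([0,T))`, `u(0)=α`, `u'(0)=0`, `u>0` on `[0,T)`, and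
`(ψ^{n-1} |u'|^{p-2} u')' = -ψ^{n-1} u^q` on `(0,T)`. -/
structure IsRadialSolution (n : ℕ) (p q : ℝ) (ψ : ℝ → ℝ) (T : ℝ≥0∞) (α : ℝ)
    (u : ℝ → ℝ) : Prop where
  init : u 0 = α
  deriv_init : deriv u 0 = 0
  pos : ∀ r : ℝ, 0 ≤ r → ENNReal.ofReal r < T → 0 < u r
  diff : ∀ r : ℝ, 0 ≤ r → ENNReal.ofReal r < T → DifferentiableAt ℝ u r
  deriv_cont : ContinuousOn (deriv u) {r : ℝ | 0 ≤ r ∧ ENNReal.ofReal r < T}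
  eqn : ∀ r : ℝ, 0 < r → ENNReal.ofReal r < T →
    HasDerivAt (fun s => ψ s ^ (n - 1) * |deriv u s| ^ (p - 2) * deriv u s)
      (-(ψ r ^ (n - 1) * u r ^ q)) r

/-- The energy function `F_u(r) = ((p-1)/p)|u'(r)|^p + u(r)^{q+1}/(q+1)`. -/
noncomputable def energyF (p q : ℝ) (u : ℝ → ℝ) (r : ℝ) : ℝ :=
  (p - 1) / p * |deriv u r| ^ p + u r ^ (q + 1) / (q + 1)

/-- The Pohozaev function
`P_u(r) = (∫₀ʳ ψ^{n-1}) F_u(r) + (ψ(r)^{n-1}/(q+1)) |u'(r)|^{p-2} u'(r) u(r)`. -/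
noncomputable def pohozaevP (n : ℕ) (p q : ℝ) (ψ u : ℝ → ℝ) (r : ℝ) : ℝ :=
  (∫ s in (0:ℝ)..r, ψ s ^ (n - 1)) * energyF p q u r +
    ψ r ^ (n - 1) / (q + 1) * (|deriv u r| ^ (p - 2) * deriv u r * u r)

/-- `K(r) = ((p-1)/p + 1/(q+1)) ψ(r)^{n-1} - (n-1)(ψ'(r)/ψ(r)) ∫₀ʳ ψ^{n-1}`. -/
noncomputable def Kfun (n : ℕ) (p q : ℝ) (ψ : ℝ → ℝ) (r : ℝ) : ℝ :=
  ((p - 1) / p + 1 / (q + 1)) * ψ r ^ (n - 1) -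
    ((n : ℝ) - 1) * (deriv ψ r / ψ r) * ∫ s in (0:ℝ)..r, ψ s ^ (n - 1)

/-- Condition (a): `r^γ ψ'(r)/ψ(r) → ℓ ∈ (0,∞)` for some `γ ∈ [0,1)`. -/
def CondA (ψ : ℝ → ℝ) : Prop :=
  ∃ γ ℓ : ℝ, 0 ≤ γ ∧ γ < 1 ∧ 0 < ℓ ∧
    Tendsto (fun r : ℝ => r ^ γ * deriv ψ r / ψ r) atTop (nhds ℓ)

/-- Condition (b): `ψ'/ψ → +∞` and `(ψ/ψ') (log(ψ'/ψ))' → 0`. -/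
def CondB (ψ : ℝ → ℝ) : Prop :=
  Tendsto (fun r : ℝ => deriv ψ r / ψ r) atTop atTop ∧
    Tendsto (fun r : ℝ => ψ r / deriv ψ r *
      deriv (fun s : ℝ => Real.log (deriv ψ s / ψ s)) r) atTop (nhds 0)

/-!
Write `W = -ψ^{n-1} |u'|^{p-2} u'` for the inward flux and `V = ∫₀ʳ ψ^{n-1}`. The energy `F_u` is
dissipated at the rate `(n-1) (ψ'/ψ) |u'|^p`, so the Pohozaev function `P_u = V F_u - W u / (q+1)`
has derivative `K |u'|^p`. Convexity of `ψ` and the supercriticality of `q` give `K ≤ 0`, hence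
`P_u ≤ 0`. This makes `W / (V u^{p-1})` nonincreasing, with limit at most `α^{q+1-p}` at the pole,
that is, `-u'/u ≤ α^{(q+1-p)/(p-1)} Θ^{1/(p-1)}`. Integrating `(log u)'` bounds `u` from below by a
positive constant as soon as `Θ^{1/(p-1)}` is integrable, and `u` is decreasing because `W > 0`.
-/

section

open Set

/-- The map `x ↦ |x|^{p-2} x`, the duality map of the real line with gauge `t ↦ t^{p-1}`. It is the
nonlinearity of the radial `p`-Laplacian, and its inverse is the duality map of the conjugate
exponent. -/
noncomputable def dualityMap (p x : ℝ) : ℝ :=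
  |x| ^ (p - 2) * x

section DualityMap

variable {p p' x : ℝ}

theorem dualityMap_zero (p : ℝ) : dualityMap p 0 = 0 :=
  mul_zero _

theorem dualityMap_pos (hx : 0 < x) : 0 < dualityMap p x :=
  mul_pos (rpow_pos_of_pos (abs_pos_of_pos hx) _) hx

theorem dualityMap_of_pos (hx : 0 < x) : dualityMap p x = x ^ (p - 1) := by
  rw [dualityMap, abs_of_pos hx, ← rpow_add_one hx.ne', sub_add]
  norm_num

theorem abs_dualityMap (hp : p ≠ 1) (x : ℝ) : |dualityMap p x| = |x| ^ (p - 1) := by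
  rcases eq_or_ne x 0 with rfl | hx
  · rw [dualityMap_zero, abs_zero, zero_rpow (sub_ne_zero.2 hp)]
  · rw [dualityMap, abs_mul, abs_of_nonneg (rpow_nonneg (abs_nonneg x) _),
      ← rpow_add_one (abs_ne_zero.2 hx), sub_add]
    norm_num

theorem mul_dualityMap_self (hp : p ≠ 0) (x : ℝ) : x * dualityMap p x = |x| ^ p := by
  rcases eq_or_ne x 0 with rfl | hx
  · rw [zero_mul, abs_zero, zero_rpow hp]
  · rw [dualityMap, mul_left_comm, ← abs_mul_abs_self x, ← sq,
      ← rpow_add_natCast (abs_ne_zero.2 hx)]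
    norm_num

theorem dualityMap_dualityMap (h : p.HolderConjugate p') (x : ℝ) :
    dualityMap p' (dualityMap p x) = x := by
  rcases eq_or_ne x 0 with rfl | hx
  · rw [dualityMap_zero, dualityMap_zero]
  have hexp : (p - 1) * (p' - 2) + (p - 2) = 0 := by linarith [h.mul_eq_add]
  rw [dualityMap, abs_dualityMap h.lt.ne', ← rpow_mul (abs_nonneg x), dualityMap, ← mul_assoc,
    ← rpow_add (abs_pos.2 hx), hexp, rpow_zero, one_mul]

theorem abs_dualityMap_rpow (h : p.HolderConjugate p') (x : ℝ) :
    |dualityMap p x| ^ p' = |x| ^ p := by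
  rw [abs_dualityMap h.lt.ne', ← rpow_mul (abs_nonneg x), h.sub_one_mul_conj]

theorem hasDerivAt_abs_rpow_dualityMap (hp : 1 < p) (x : ℝ) :
    HasDerivAt (fun y : ℝ ↦ |y| ^ p) (p * dualityMap p x) x :=
  (hasDerivAt_abs_rpow x hp).congr_deriv (mul_assoc _ _ _)

theorem continuous_dualityMap (hp : 1 < p) : Continuous (dualityMap p) := by
  have hp0 : p ≠ 0 := by linarith
  have hderiv : deriv (fun y : ℝ ↦ ‖y‖ ^ p) = fun x ↦ p * dualityMap p x :=
    funext fun x ↦ (hasDerivAt_abs_rpow_dualityMap hp x).deriv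
  have hcont : Continuous fun x ↦ p * dualityMap p x :=
    hderiv ▸ (contDiff_norm_rpow hp).continuous_deriv le_rfl
  simpa only [mul_div_cancel_left₀ _ hp0] using hcont.div_const p

end DualityMap

theorem exists_tendsto_atTop_of_antitoneOn_Ici {ι E : Type*} [LinearOrder ι]
    [ConditionallyCompleteLattice E] [TopologicalSpace E] [InfConvergenceClass E] {u : ι → E}
    {a : ι} {c : E} (hu : AntitoneOn u (Ici a)) (hc : ∀ r, a ≤ r → c ≤ u r) :
    ∃ l, c ≤ l ∧ Tendsto u atTop (𝓝 l) := by
  have : Nonempty ι := ⟨a⟩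
  have hle : ∀ r, c ≤ u (max a r) := fun r ↦ hc _ (le_max_left a r)
  have hanti : Antitone fun r ↦ u (max a r) := fun x y hxy ↦
    hu (le_max_left a x) (le_max_left a y) (max_le_max_left a hxy)
  have hbdd : BddBelow (range fun r ↦ u (max a r)) := ⟨c, forall_mem_range.2 hle⟩
  refine ⟨⨅ r, u (max a r), le_ciInf hle, (tendsto_atTop_ciInf hanti hbdd).congr' ?_⟩
  filter_upwards [eventually_ge_atTop a] with r hr
  rw [max_eq_right hr]

/-- The volume `∫₀ʳ ψ^{n-1}` of the ball of radius `r` in the model with warping function `ψ`, up to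
the area of the unit sphere. -/
noncomputable def modelVolume (n : ℕ) (ψ : ℝ → ℝ) (r : ℝ) : ℝ :=
  ∫ s in (0 : ℝ)..r, ψ s ^ (n - 1)

theorem modelVolume_zero (n : ℕ) (ψ : ℝ → ℝ) : modelVolume n ψ 0 = 0 :=
  intervalIntegral.integral_same

/-- A warping function of a rotationally symmetric metric `dr² + ψ(r)² dθ²`. No behaviour of `ψ`
at the pole is prescribed beyond continuity, so the metric may be singular there. -/
structure IsWarpingFunction (ψ : ℝ → ℝ) : Prop where
  continuousOn : ContinuousOn ψ (Ici 0)
  differentiableAt : ∀ r, 0 < r → DifferentiableAt ℝ ψ r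
  pos : ∀ r, 0 < r → 0 < ψ r

namespace IsWarpingFunction

variable {ψ : ℝ → ℝ} {n : ℕ} {r : ℝ}

protected theorem pow_pos (hψ : IsWarpingFunction ψ) (m : ℕ) (hr : 0 < r) : 0 < ψ r ^ m :=
  _root_.pow_pos (hψ.pos r hr) m

theorem intervalIntegrable_pow (hψ : IsWarpingFunction ψ) (m : ℕ) (hr : 0 ≤ r) :
    IntervalIntegrable (fun s ↦ ψ s ^ m) volume 0 r :=
  ((hψ.continuousOn.mono Icc_subset_Ici_self).pow m).intervalIntegrable_of_Icc hr

theorem hasDerivAt_modelVolume (hψ : IsWarpingFunction ψ) (n : ℕ) (hr : 0 < r) :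
    HasDerivAt (modelVolume n ψ) (ψ r ^ (n - 1)) r := by
  have hcont : ContinuousOn (fun s ↦ ψ s ^ (n - 1)) (Ioi 0) :=
    (hψ.continuousOn.mono Ioi_subset_Ici_self).pow _
  exact intervalIntegral.integral_hasDerivAt_right (hψ.intervalIntegrable_pow _ hr.le)
    (hcont.stronglyMeasurableAtFilter isOpen_Ioi r hr) (hcont.continuousAt (Ioi_mem_nhds hr))

theorem continuousOn_modelVolume (hψ : IsWarpingFunction ψ) (n : ℕ) :
    ContinuousOn (modelVolume n ψ) (Ici 0) := by
  intro r hr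
  have hr1 : (0 : ℝ) ≤ r + 1 := add_nonneg hr zero_le_one
  have hcont : ContinuousOn (modelVolume n ψ) (uIcc 0 (r + 1)) :=
    intervalIntegral.continuousOn_primitive_interval' (hψ.intervalIntegrable_pow _ hr1)
      left_mem_uIcc
  rw [uIcc_of_le hr1, ← Ici_inter_Iic] at hcont
  exact (hcont r ⟨hr, by simp⟩).mono_of_mem_nhdsWithin
    (inter_mem_nhdsWithin _ (Iic_mem_nhds (lt_add_one r)))

theorem modelVolume_pos (hψ : IsWarpingFunction ψ) (n : ℕ) (hr : 0 < r) :
    0 < modelVolume n ψ r :=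
  intervalIntegral.intervalIntegral_pos_of_pos_on (hψ.intervalIntegrable_pow _ hr.le)
    (fun _ hs ↦ hψ.pow_pos _ hs.1) hr

theorem Theta_pos (hψ : IsWarpingFunction ψ) (n : ℕ) (hr : 0 < r) : 0 < Theta n ψ r :=
  div_pos (hψ.modelVolume_pos n hr) (hψ.pow_pos _ hr)

theorem hasDerivAt_pow_sub_one (hψ : IsWarpingFunction ψ) (hn : n ≠ 0) (hr : 0 < r) :
    HasDerivAt (fun s ↦ ψ s ^ (n - 1)) ((n - 1) * (deriv ψ r / ψ r) * ψ r ^ (n - 1)) r := by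
  have hψr := (hψ.pos r hr).ne'
  obtain ⟨m, rfl⟩ := Nat.exists_eq_succ_of_ne_zero hn
  refine ((hψ.differentiableAt r hr).hasDerivAt.pow m).congr_deriv ?_
  cases m
  · simp
  · simp only [Nat.succ_eq_add_one, Nat.add_sub_cancel, pow_succ]
    push_cast
    field_simp
    ring

theorem pow_le_mul_deriv_mul_modelVolume (hψ : IsWarpingFunction ψ) (hψ0 : ψ 0 = 0)
    (hconv : ConvexOn ℝ (Ici 0) ψ) (hn : n ≠ 0) (hr : 0 < r) :
    ψ r ^ n ≤ n * deriv ψ r * modelVolume n ψ r := by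
  have hderiv_mono : MonotoneOn (deriv ψ) (Ioi 0) :=
    (hconv.subset Ioi_subset_Ici_self (convex_Ioi 0)).monotoneOn_deriv hψ.differentiableAt
  have hmono : MonotoneOn (fun s ↦ n * deriv ψ r * modelVolume n ψ s - ψ s ^ n) (Icc 0 r) := by
    refine monotoneOn_of_hasDerivWithinAt_nonneg
      (f' := fun s ↦ n * ψ s ^ (n - 1) * (deriv ψ r - deriv ψ s)) (convex_Icc 0 r) ?_
      (fun s hs ↦ ?_) fun s hs ↦ ?_
    · exact ((continuousOn_const.mul (hψ.continuousOn_modelVolume n)).sub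
        (hψ.continuousOn.pow n)).mono Icc_subset_Ici_self
    all_goals rw [interior_Icc] at hs
    · refine HasDerivAt.hasDerivWithinAt ?_
      refine (((hψ.hasDerivAt_modelVolume n hs.1).const_mul (n * deriv ψ r)).sub
        ((hψ.differentiableAt s hs.1).hasDerivAt.pow n)).congr_deriv ?_
      ring
    · have := hψ.pow_pos (n - 1) hs.1
      have := sub_nonneg.2 (hderiv_mono hs.1 hr hs.2.le)
      positivity
  have hle := hmono ⟨le_rfl, hr.le⟩ ⟨hr.le, le_rfl⟩ hr.le
  simp only [modelVolume_zero, hψ0, zero_pow hn, mul_zero, sub_zero] at hle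
  exact sub_nonneg.1 hle

theorem Kfun_nonpos (hψ : IsWarpingFunction ψ) (hψ0 : ψ 0 = 0) (hconv : ConvexOn ℝ (Ici 0) ψ)
    {p q : ℝ} (hp : p ≠ 0) (hn : n ≠ 0) (hpq : 1 / (q + 1) ≤ 1 / p - 1 / n) (hr : 0 < r) :
    Kfun n p q ψ r ≤ 0 := by
  have hn_pos : (0 : ℝ) < n := by positivity
  have hn_one : (0 : ℝ) ≤ n - 1 := sub_nonneg.2 (Nat.one_le_cast.2 (Nat.one_le_iff_ne_zero.2 hn))
  have hexp : (p - 1) / p + 1 / (q + 1) ≤ (n - 1) / n := by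
    rw [sub_div, sub_div, div_self hp, div_self hn_pos.ne']
    linarith
  have hcone : ψ r ^ (n - 1) / n ≤ deriv ψ r / ψ r * modelVolume n ψ r := by
    rw [div_mul_eq_mul_div, div_le_div_iff₀ hn_pos (hψ.pos r hr), pow_sub_one_mul hn]
    linarith [hψ.pow_le_mul_deriv_mul_modelVolume hψ0 hconv hn hr]
  refine sub_nonpos.2 ?_
  calc ((p - 1) / p + 1 / (q + 1)) * ψ r ^ (n - 1)
      ≤ (n - 1) / n * ψ r ^ (n - 1) :=
        mul_le_mul_of_nonneg_right hexp (hψ.pow_pos _ hr).le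
    _ = (n - 1) * (ψ r ^ (n - 1) / n) := by ring
    _ ≤ (n - 1) * (deriv ψ r / ψ r * modelVolume n ψ r) := by gcongr
    _ = (n - 1) * (deriv ψ r / ψ r) * modelVolume n ψ r := by ring

end IsWarpingFunction

/-- The interval `[0, T)` on which a radial solution is defined. -/
def radialInterval (T : ℝ≥0∞) : Set ℝ :=
  {r | 0 ≤ r ∧ ENNReal.ofReal r < T}

theorem radialInterval_top : radialInterval ⊤ = Ici 0 := by
  ext r
  simp [radialInterval]

theorem radialInterval_subset_Ici (T : ℝ≥0∞) : radialInterval T ⊆ Ici 0 :=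
  fun _ hr ↦ hr.1

theorem Icc_subset_radialInterval {T : ℝ≥0∞} {r : ℝ} (hr : r ∈ radialInterval T) :
    Icc 0 r ⊆ radialInterval T :=
  fun _ hs ↦ ⟨hs.1, (ENNReal.ofReal_le_ofReal hs.2).trans_lt hr.2⟩

theorem zero_mem_radialInterval {T : ℝ≥0∞} {r : ℝ} (hr : r ∈ radialInterval T) :
    0 ∈ radialInterval T :=
  Icc_subset_radialInterval hr ⟨le_rfl, hr.1⟩

theorem convex_radialInterval (T : ℝ≥0∞) : Convex ℝ (radialInterval T) :=
  OrdConnected.convex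
    ⟨fun _ hx _ hy _ hz ↦ Icc_subset_radialInterval hy ⟨hx.1.trans hz.1, hz.2⟩⟩

theorem pos_of_mem_interior_radialInterval {T : ℝ≥0∞} {r : ℝ}
    (hr : r ∈ interior (radialInterval T)) : 0 < r :=
  interior_Ici.subset (interior_mono (radialInterval_subset_Ici T) hr)

/-- The inward flux `-ψ^{n-1} |u'|^{p-2} u'` of a radial function. -/
noncomputable def radialFlux (n : ℕ) (p : ℝ) (ψ u : ℝ → ℝ) (r : ℝ) : ℝ :=
  ψ r ^ (n - 1) * dualityMap p (-deriv u r)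

theorem radialFlux_div_pow {ψ : ℝ → ℝ} {r : ℝ} (hψ : IsWarpingFunction ψ) (n : ℕ) (p : ℝ)
    (u : ℝ → ℝ) (hr : 0 < r) :
    radialFlux n p ψ u r / ψ r ^ (n - 1) = dualityMap p (-deriv u r) :=
  mul_div_cancel_left₀ _ (hψ.pow_pos _ hr).ne'

theorem radialFlux_mul_deriv {p : ℝ} (hp : p ≠ 0) (n : ℕ) (ψ u : ℝ → ℝ) (r : ℝ) :
    radialFlux n p ψ u r * deriv u r = -(ψ r ^ (n - 1) * |deriv u r| ^ p) := by
  rw [← abs_neg, ← mul_dualityMap_self hp, radialFlux]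
  ring

theorem pohozaevP_eq_sub (n : ℕ) (p q : ℝ) (ψ u : ℝ → ℝ) :
    pohozaevP n p q ψ u = fun r ↦
      modelVolume n ψ r * energyF p q u r - radialFlux n p ψ u r * u r / (q + 1) := by
  funext r
  simp only [pohozaevP, modelVolume, radialFlux, dualityMap, abs_neg]
  ring

namespace IsRadialSolution

variable {n : ℕ} {p q α r : ℝ} {ψ u : ℝ → ℝ} {T : ℝ≥0∞}

theorem pos_of_mem (hu : IsRadialSolution n p q ψ T α u) (hr : r ∈ radialInterval T) : 0 < u r :=
  hu.pos r hr.1 hr.2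

theorem init_pos (hu : IsRadialSolution n p q ψ T α u) (hr : r ∈ radialInterval T) : 0 < α :=
  hu.init ▸ hu.pos_of_mem (zero_mem_radialInterval hr)

protected theorem hasDerivAt (hu : IsRadialSolution n p q ψ T α u) (hr : r ∈ radialInterval T) :
    HasDerivAt u (deriv u r) r :=
  (hu.diff r hr.1 hr.2).hasDerivAt

protected theorem continuousOn (hu : IsRadialSolution n p q ψ T α u) :
    ContinuousOn u (radialInterval T) :=
  fun _ hr ↦ (hu.hasDerivAt hr).continuousAt.continuousWithinAt

theorem hasDerivAt_radialFlux (hu : IsRadialSolution n p q ψ T α u) (hr0 : 0 < r)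
    (hr : r ∈ radialInterval T) :
    HasDerivAt (radialFlux n p ψ u) (ψ r ^ (n - 1) * u r ^ q) r := by
  have hflux : radialFlux n p ψ u =
      -fun s ↦ ψ s ^ (n - 1) * |deriv u s| ^ (p - 2) * deriv u s := by
    funext s
    simp only [radialFlux, dualityMap, abs_neg, mul_neg, mul_assoc, Pi.neg_apply]
  rw [hflux]
  exact (hu.eqn r hr0 hr.2).neg.congr_deriv (neg_neg _)

theorem radialFlux_zero (hu : IsRadialSolution n p q ψ T α u) : radialFlux n p ψ u 0 = 0 := by
  rw [radialFlux, hu.deriv_init, neg_zero, dualityMap_zero, mul_zero]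

theorem continuousOn_radialFlux (hψ : IsWarpingFunction ψ) (hp : 1 < p)
    (hu : IsRadialSolution n p q ψ T α u) :
    ContinuousOn (radialFlux n p ψ u) (radialInterval T) :=
  ((hψ.continuousOn.mono (radialInterval_subset_Ici T)).pow (n - 1)).mul
    ((continuous_dualityMap hp).comp_continuousOn hu.deriv_cont.neg)

theorem radialFlux_pos (hψ : IsWarpingFunction ψ) (hp : 1 < p)
    (hu : IsRadialSolution n p q ψ T α u) (hr0 : 0 < r) (hr : r ∈ radialInterval T) :
    0 < radialFlux n p ψ u r := by
  have hmono : StrictMonoOn (radialFlux n p ψ u) (radialInterval T) := by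
    refine strictMonoOn_of_hasDerivWithinAt_pos (convex_radialInterval T)
      (hu.continuousOn_radialFlux hψ hp) (fun x hx ↦ (hu.hasDerivAt_radialFlux
        (pos_of_mem_interior_radialInterval hx) (interior_subset hx)).hasDerivWithinAt)
      fun x hx ↦ ?_
    have hxT := interior_subset hx
    exact mul_pos (hψ.pow_pos _ (pos_of_mem_interior_radialInterval hx))
      (rpow_pos_of_pos (hu.pos_of_mem hxT) q)
  simpa only [hu.radialFlux_zero] using hmono (zero_mem_radialInterval hr) hr hr0

theorem deriv_neg (hψ : IsWarpingFunction ψ) (hp : 1 < p)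
    (hu : IsRadialSolution n p q ψ T α u) (hr0 : 0 < r) (hr : r ∈ radialInterval T) :
    deriv u r < 0 := by
  have hpos : 0 < dualityMap p (-deriv u r) := by
    rw [← radialFlux_div_pow hψ n p u hr0]
    exact div_pos (hu.radialFlux_pos hψ hp hr0 hr) (hψ.pow_pos _ hr0)
  rw [← neg_pos, ← dualityMap_dualityMap (HolderConjugate.conjExponent hp) (-deriv u r)]
  exact dualityMap_pos hpos

theorem strictAntiOn (hψ : IsWarpingFunction ψ) (hp : 1 < p)
    (hu : IsRadialSolution n p q ψ T α u) : StrictAntiOn u (radialInterval T) :=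
  strictAntiOn_of_deriv_neg (convex_radialInterval T) hu.continuousOn fun _ hr ↦
    hu.deriv_neg hψ hp (pos_of_mem_interior_radialInterval hr) (interior_subset hr)

-- `|u'|^p = |W / ψ^{n-1}|^{p'}` for the flux `W`, and `W` is differentiable although `u'` is not
-- assumed to be.
theorem hasDerivAt_abs_deriv_rpow (hψ : IsWarpingFunction ψ) (hn : n ≠ 0) (hp : 1 < p)
    (hu : IsRadialSolution n p q ψ T α u) (hr0 : 0 < r) (hr : r ∈ radialInterval T) :
    HasDerivAt (fun s ↦ |deriv u s| ^ p)
      (-(p / (p - 1)) * (deriv u r * u r ^ q +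
        (n - 1) * (deriv ψ r / ψ r) * |deriv u r| ^ p)) r := by
  have hp' := HolderConjugate.conjExponent hp
  set p' := conjExponent p with hp'_eq
  have heq : (fun s ↦ |deriv u s| ^ p) =ᶠ[𝓝 r]
      fun s ↦ |radialFlux n p ψ u s / ψ s ^ (n - 1)| ^ p' := by
    filter_upwards [Ioi_mem_nhds hr0] with s hs
    rw [radialFlux_div_pow hψ n p u hs, abs_dualityMap_rpow hp', abs_neg]
  have hquot : HasDerivAt (fun s ↦ radialFlux n p ψ u s / ψ s ^ (n - 1))
      (u r ^ q - (n - 1) * (deriv ψ r / ψ r) * dualityMap p (-deriv u r)) r := by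
    have hpow := (hψ.pow_pos (n - 1) hr0).ne'
    refine ((hu.hasDerivAt_radialFlux hr0 hr).div (hψ.hasDerivAt_pow_sub_one hn hr0)
      hpow).congr_deriv ?_
    rw [radialFlux]
    field_simp
  refine (((hasDerivAt_abs_rpow_dualityMap hp'.symm.lt _).comp r hquot).congr_of_eventuallyEq
    heq).congr_deriv ?_
  rw [radialFlux_div_pow hψ n p u hr0, dualityMap_dualityMap hp', ← abs_neg (deriv u r),
    ← mul_dualityMap_self hp'.ne_zero, hp'_eq, conjExponent]
  ring

theorem hasDerivAt_energyF (hψ : IsWarpingFunction ψ) (hn : n ≠ 0) (hp : 1 < p) (hq : q + 1 ≠ 0)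
    (hu : IsRadialSolution n p q ψ T α u) (hr0 : 0 < r) (hr : r ∈ radialInterval T) :
    HasDerivAt (energyF p q u) (-((n - 1) * (deriv ψ r / ψ r) * |deriv u r| ^ p)) r := by
  have hp0 : p ≠ 0 := by linarith
  have hp1 : p - 1 ≠ 0 := by linarith
  have hkinetic := (hu.hasDerivAt_abs_deriv_rpow hψ hn hp hr0 hr).const_mul ((p - 1) / p)
  have hpotential := ((hu.hasDerivAt hr).rpow_const (p := q + 1)
    (Or.inl (hu.pos_of_mem hr).ne')).div_const (q + 1)
  refine (hkinetic.add hpotential).congr_deriv ?_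
  rw [add_sub_cancel_right]
  field_simp
  ring

theorem continuousOn_energyF (hp : 0 ≤ p) (hu : IsRadialSolution n p q ψ T α u) :
    ContinuousOn (energyF p q u) (radialInterval T) :=
  (continuousOn_const.mul (hu.deriv_cont.abs.rpow_const fun _ _ ↦ Or.inr hp)).add
    ((hu.continuousOn.rpow_const fun _ hr ↦ Or.inl (hu.pos_of_mem hr).ne').div_const _)

theorem hasDerivAt_pohozaevP (hψ : IsWarpingFunction ψ) (hn : n ≠ 0) (hp : 1 < p)
    (hq : q + 1 ≠ 0) (hu : IsRadialSolution n p q ψ T α u) (hr0 : 0 < r)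
    (hr : r ∈ radialInterval T) :
    HasDerivAt (pohozaevP n p q ψ u) (Kfun n p q ψ r * |deriv u r| ^ p) r := by
  have hpow : u r ^ (q + 1) = u r ^ q * u r := rpow_add_one (hu.pos_of_mem hr).ne' q
  rw [pohozaevP_eq_sub]
  refine (((hψ.hasDerivAt_modelVolume n hr0).mul (hu.hasDerivAt_energyF hψ hn hp hq hr0 hr)).sub
    (((hu.hasDerivAt_radialFlux hr0 hr).mul (hu.hasDerivAt hr)).div_const (q + 1))).congr_deriv ?_
  rw [radialFlux_mul_deriv (by linarith), Kfun, energyF, hpow, modelVolume]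
  ring

theorem pohozaevP_nonpos (hψ : IsWarpingFunction ψ) (hn : n ≠ 0) (hp : 1 < p) (hq : q + 1 ≠ 0)
    (hK : ∀ r, 0 < r → Kfun n p q ψ r ≤ 0) (hu : IsRadialSolution n p q ψ T α u)
    (hr : r ∈ radialInterval T) : pohozaevP n p q ψ u r ≤ 0 := by
  have hcont : ContinuousOn (pohozaevP n p q ψ u) (radialInterval T) := by
    rw [pohozaevP_eq_sub]
    exact (((hψ.continuousOn_modelVolume n).mono (radialInterval_subset_Ici T)).mul
      (hu.continuousOn_energyF (by linarith))).sub
      (((hu.continuousOn_radialFlux hψ hp).mul hu.continuousOn).div_const _)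
  have hanti : AntitoneOn (pohozaevP n p q ψ u) (radialInterval T) :=
    antitoneOn_of_hasDerivWithinAt_nonpos (convex_radialInterval T) hcont
      (fun x hx ↦ (hu.hasDerivAt_pohozaevP hψ hn hp hq
        (pos_of_mem_interior_radialInterval hx) (interior_subset hx)).hasDerivWithinAt)
      fun x hx ↦ mul_nonpos_of_nonpos_of_nonneg (hK x (pos_of_mem_interior_radialInterval hx))
        (rpow_nonneg (abs_nonneg _) p)
  have hzero : pohozaevP n p q ψ u 0 = 0 := by
    rw [pohozaevP_eq_sub]
    simp only [modelVolume_zero, hu.radialFlux_zero, zero_mul, zero_div, sub_zero]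
  exact (hanti (zero_mem_radialInterval hr) hr hr.1).trans_eq hzero

theorem modelVolume_mul_le_radialFlux_mul (hψ : IsWarpingFunction ψ) (hn : n ≠ 0) (hp : 1 < p)
    (hpq : p ≤ q + 1) (hK : ∀ r, 0 < r → Kfun n p q ψ r ≤ 0)
    (hu : IsRadialSolution n p q ψ T α u) (hr0 : 0 < r) (hr : r ∈ radialInterval T) :
    modelVolume n ψ r * ((p - 1) * |deriv u r| ^ p + u r ^ (q + 1)) ≤
      radialFlux n p ψ u r * u r := by
  have hp0 : 0 < p := by linarith
  have hq : 0 < q + 1 := by linarith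
  have hV := hψ.modelVolume_pos n hr0
  have henergy : (p - 1) * |deriv u r| ^ p + u r ^ (q + 1) ≤ (q + 1) * energyF p q u r := by
    have hcoef : p - 1 ≤ (q + 1) * ((p - 1) / p) := by
      rw [mul_div_assoc', le_div_iff₀ hp0]
      nlinarith
    calc (p - 1) * |deriv u r| ^ p + u r ^ (q + 1)
        ≤ (q + 1) * ((p - 1) / p) * |deriv u r| ^ p + u r ^ (q + 1) := by gcongr
      _ = (q + 1) * energyF p q u r := by
        rw [energyF]
        field_simp
  have hP := hu.pohozaevP_nonpos hψ hn hp hq.ne' hK hr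
  rw [pohozaevP_eq_sub, sub_nonpos, le_div_iff₀ hq] at hP
  calc modelVolume n ψ r * ((p - 1) * |deriv u r| ^ p + u r ^ (q + 1))
      ≤ modelVolume n ψ r * ((q + 1) * energyF p q u r) := by gcongr
    _ = modelVolume n ψ r * energyF p q u r * (q + 1) := by ring
    _ ≤ radialFlux n p ψ u r * u r := hP

theorem antitoneOn_log_radialFlux_sub (hψ : IsWarpingFunction ψ) (hn : n ≠ 0) (hp : 1 < p)
    (hpq : p ≤ q + 1) (hK : ∀ r, 0 < r → Kfun n p q ψ r ≤ 0)
    (hu : IsRadialSolution n p q ψ T α u) :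
    AntitoneOn
      (fun r ↦ log (radialFlux n p ψ u r) - log (modelVolume n ψ r) - (p - 1) * log (u r))
      (Ioi 0 ∩ radialInterval T) := by
  have hderiv : ∀ r ∈ Ioi 0 ∩ radialInterval T, HasDerivAt
      (fun r ↦ log (radialFlux n p ψ u r) - log (modelVolume n ψ r) - (p - 1) * log (u r))
      (ψ r ^ (n - 1) * u r ^ q / radialFlux n p ψ u r - ψ r ^ (n - 1) / modelVolume n ψ r -
        (p - 1) * (deriv u r / u r)) r := fun r ⟨hr0, hr⟩ ↦
    (((hu.hasDerivAt_radialFlux hr0 hr).log (hu.radialFlux_pos hψ hp hr0 hr).ne').sub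
      ((hψ.hasDerivAt_modelVolume n hr0).log (hψ.modelVolume_pos n hr0).ne')).sub
      (((hu.hasDerivAt hr).log (hu.pos_of_mem hr).ne').const_mul (p - 1))
  refine antitoneOn_of_hasDerivWithinAt_nonpos ((convex_Ioi 0).inter (convex_radialInterval T))
    (fun r hr ↦ (hderiv r hr).continuousAt.continuousWithinAt)
    (fun r hr ↦ (hderiv r (interior_subset hr)).hasDerivWithinAt) fun r hr ↦ ?_
  obtain ⟨hr0, hr⟩ := interior_subset hr
  have hle := hu.modelVolume_mul_le_radialFlux_mul hψ hn hp hpq hK hr0 hr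
  have hW := hu.radialFlux_pos hψ hp hr0 hr
  have hV := hψ.modelVolume_pos n hr0
  have hur := hu.pos_of_mem hr
  have hA := hψ.pow_pos (n - 1) hr0
  have hpow : u r ^ (q + 1) = u r ^ q * u r := rpow_add_one hur.ne' q
  calc ψ r ^ (n - 1) * u r ^ q / radialFlux n p ψ u r - ψ r ^ (n - 1) / modelVolume n ψ r -
        (p - 1) * (deriv u r / u r)
      = (ψ r ^ (n - 1) * u r ^ q * modelVolume n ψ r * u r -
          ψ r ^ (n - 1) * radialFlux n p ψ u r * u r -
          (p - 1) * modelVolume n ψ r * (radialFlux n p ψ u r * deriv u r)) /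
          (radialFlux n p ψ u r * modelVolume n ψ r * u r) := by field_simp
    _ = ψ r ^ (n - 1) * (modelVolume n ψ r * ((p - 1) * |deriv u r| ^ p + u r ^ (q + 1)) -
          radialFlux n p ψ u r * u r) / (radialFlux n p ψ u r * modelVolume n ψ r * u r) := by
        rw [radialFlux_mul_deriv (by linarith), hpow]
        ring
    _ ≤ 0 := div_nonpos_of_nonpos_of_nonneg
        (mul_nonpos_of_nonneg_of_nonpos hA.le (sub_nonpos.2 hle)) (by positivity)

theorem radialFlux_le_rpow_mul_modelVolume (hψ : IsWarpingFunction ψ) (hp : 1 < p) (hq : 0 ≤ q)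
    (hu : IsRadialSolution n p q ψ T α u) (hr : r ∈ radialInterval T) :
    radialFlux n p ψ u r ≤ α ^ q * modelVolume n ψ r := by
  have h0 := zero_mem_radialInterval hr
  have hmono : MonotoneOn (fun s ↦ α ^ q * modelVolume n ψ s - radialFlux n p ψ u s)
      (radialInterval T) := by
    have hV := (hψ.continuousOn_modelVolume n).mono (radialInterval_subset_Ici T)
    refine monotoneOn_of_hasDerivWithinAt_nonneg (convex_radialInterval T)
      ((continuousOn_const.mul hV).sub (hu.continuousOn_radialFlux hψ hp))
      (fun x hx ↦ (((hψ.hasDerivAt_modelVolume n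
        (pos_of_mem_interior_radialInterval hx)).const_mul (α ^ q)).sub (hu.hasDerivAt_radialFlux
        (pos_of_mem_interior_radialInterval hx) (interior_subset hx))).hasDerivWithinAt)
      fun x hx ↦ ?_
    have hx0 := pos_of_mem_interior_radialInterval hx
    have hxT := interior_subset hx
    have hux : u x ≤ α := hu.init ▸ (hu.strictAntiOn hψ hp).antitoneOn h0 hxT hxT.1
    rw [mul_comm, ← mul_sub]
    exact mul_nonneg (hψ.pow_pos _ hx0).le
      (sub_nonneg.2 (rpow_le_rpow (hu.pos_of_mem hxT).le hux hq))
  have hle := hmono h0 hr hr.1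
  simp only [modelVolume_zero, hu.radialFlux_zero, mul_zero, sub_zero] at hle
  exact sub_nonneg.1 hle

theorem radialFlux_le_rpow_mul_rpow_mul_modelVolume (hψ : IsWarpingFunction ψ) (hn : n ≠ 0)
    (hp : 1 < p) (hpq : p ≤ q + 1) (hK : ∀ r, 0 < r → Kfun n p q ψ r ≤ 0)
    (hu : IsRadialSolution n p q ψ T α u) (hr0 : 0 < r) (hr : r ∈ radialInterval T) :
    radialFlux n p ψ u r ≤ α ^ (q + 1 - p) * u r ^ (p - 1) * modelVolume n ψ r := by
  have h0 := zero_mem_radialInterval hr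
  have hα := hu.init_pos hr
  have hur := hu.pos_of_mem hr
  have hlim : Tendsto (fun s ↦ q * log α - (p - 1) * log (u s)) (𝓝[>] 0)
      (𝓝 (q * log α - (p - 1) * log α)) := by
    have hu0 : Tendsto u (𝓝[>] 0) (𝓝 α) :=
      hu.init ▸ (hu.hasDerivAt h0).continuousAt.tendsto.mono_left nhdsWithin_le_nhds
    exact tendsto_const_nhds.sub ((hu0.log hα.ne').const_mul _)
  have hlog : log (radialFlux n p ψ u r) - log (modelVolume n ψ r) - (p - 1) * log (u r) ≤
      q * log α - (p - 1) * log α := by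
    refine ge_of_tendsto hlim ?_
    filter_upwards [Ioo_mem_nhdsGT hr0] with s hs
    have hsT := Icc_subset_radialInterval hr (Ioo_subset_Icc_self hs)
    have hVs := hψ.modelVolume_pos n hs.1
    have hanti := hu.antitoneOn_log_radialFlux_sub hψ hn hp hpq hK ⟨hs.1, hsT⟩ ⟨hr0, hr⟩ hs.2.le
    have hlog_s := log_le_log (hu.radialFlux_pos hψ hp hs.1 hsT)
      (hu.radialFlux_le_rpow_mul_modelVolume hψ hp (by linarith) hsT)
    rw [log_mul (by positivity) hVs.ne', log_rpow hα] at hlog_s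
    dsimp only at hanti
    linarith
  have hV := hψ.modelVolume_pos n hr0
  rw [← log_le_log_iff (hu.radialFlux_pos hψ hp hr0 hr) (by positivity),
    log_mul (by positivity) hV.ne', log_mul (by positivity) (by positivity), log_rpow hα,
    log_rpow hur]
  linarith

theorem neg_deriv_div_le (hψ : IsWarpingFunction ψ) (hn : n ≠ 0) (hp : 1 < p) (hpq : p ≤ q + 1)
    (hK : ∀ r, 0 < r → Kfun n p q ψ r ≤ 0) (hu : IsRadialSolution n p q ψ T α u) (hr0 : 0 < r)
    (hr : r ∈ radialInterval T) :
    -(deriv u r / u r) ≤ α ^ ((q + 1 - p) / (p - 1)) * Theta n ψ r ^ (1 / (p - 1)) := by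
  have hα := hu.init_pos hr
  have hur := hu.pos_of_mem hr
  have hA := hψ.pow_pos (n - 1) hr0
  have hΘ := hψ.Theta_pos n hr0
  have hneg : 0 < -deriv u r := neg_pos.2 (hu.deriv_neg hψ hp hr0 hr)
  have hpow : (-deriv u r / u r) ^ (p - 1) ≤ α ^ (q + 1 - p) * Theta n ψ r := by
    rw [div_rpow hneg.le hur.le, div_le_iff₀ (rpow_pos_of_pos hur _),
      ← dualityMap_of_pos hneg, ← radialFlux_div_pow hψ n p u hr0, div_le_iff₀ hA]
    calc radialFlux n p ψ u r
        ≤ α ^ (q + 1 - p) * u r ^ (p - 1) * modelVolume n ψ r :=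
          hu.radialFlux_le_rpow_mul_rpow_mul_modelVolume hψ hn hp hpq hK hr0 hr
      _ = α ^ (q + 1 - p) * u r ^ (p - 1) * (Theta n ψ r * ψ r ^ (n - 1)) := by
          rw [Theta, div_mul_cancel₀ _ hA.ne', modelVolume]
      _ = α ^ (q + 1 - p) * Theta n ψ r * u r ^ (p - 1) * ψ r ^ (n - 1) := by ring
  rw [← neg_div]
  calc -deriv u r / u r
      ≤ (α ^ (q + 1 - p) * Theta n ψ r) ^ (p - 1)⁻¹ :=
        (le_rpow_inv_iff_of_pos (by positivity) (by positivity) (by linarith)).2 hpow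
    _ = α ^ ((q + 1 - p) / (p - 1)) * Theta n ψ r ^ (1 / (p - 1)) := by
        rw [mul_rpow (by positivity) hΘ.le, ← rpow_mul hα.le, one_div, div_eq_mul_inv]

theorem mul_exp_neg_integral_le (hψ : IsWarpingFunction ψ) (hn : n ≠ 0) (hp : 1 < p)
    (hpq : p ≤ q + 1) (hK : ∀ r, 0 < r → Kfun n p q ψ r ≤ 0)
    (hu : IsRadialSolution n p q ψ T α u) (hr : r ∈ radialInterval T)
    (hint : IntervalIntegrable (fun s ↦ Theta n ψ s ^ (1 / (p - 1))) volume 0 r) :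
    α * exp (-(α ^ ((q + 1 - p) / (p - 1)) *
      ∫ s in (0 : ℝ)..r, Theta n ψ s ^ (1 / (p - 1)))) ≤ u r := by
  have hα := hu.init_pos hr
  have hur := hu.pos_of_mem hr
  have hsub := Icc_subset_radialInterval hr
  have hlog := intervalIntegral.sub_le_integral_of_hasDeriv_right_of_le hr.1
    (((hu.continuousOn.mono hsub).log fun _ hs ↦ (hu.pos_of_mem (hsub hs)).ne').neg)
    (fun s hs ↦ ((hu.hasDerivAt (hsub (Ioo_subset_Icc_self hs))).log
      (hu.pos_of_mem (hsub (Ioo_subset_Icc_self hs))).ne').neg.hasDerivWithinAt)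
    ((intervalIntegrable_iff_integrableOn_Icc_of_le hr.1).1 (hint.const_mul _))
    fun s hs ↦ hu.neg_deriv_div_le hψ hn hp hpq hK hs.1 (hsub (Ioo_subset_Icc_self hs))
  rw [intervalIntegral.integral_const_mul, Pi.neg_apply, Pi.neg_apply, hu.init] at hlog
  rw [← log_le_log_iff (by positivity) hur, log_mul hα.ne' (exp_pos _).ne', log_exp]
  linarith

end IsRadialSolution

namespace IsCHModel

variable {ψ : ℝ → ℝ}

theorem isWarpingFunction (hψ : IsCHModel ψ) : IsWarpingFunction ψ where
  continuousOn := hψ.1.continuous.continuousOn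
  differentiableAt r _ := hψ.1.differentiable (by simp) r
  pos := hψ.2.2.2.2

theorem convexOn (hψ : IsCHModel ψ) : ConvexOn ℝ (Ici 0) ψ :=
  convexOn_of_deriv2_nonneg' (convex_Ici 0) (hψ.1.differentiable (by simp)).differentiableOn
    ((ContDiff.deriv' (n := 1) (hψ.1.of_le (by norm_cast))).differentiable
      one_ne_zero).differentiableOn hψ.2.2.2.1

end IsCHModel

theorem one_div_add_one_le_of_sobolev_le {n p q : ℝ} (hp : 0 < p) (hpn : p < n)
    (hq : n * p / (n - p) - 1 ≤ q) : 1 / (q + 1) ≤ 1 / p - 1 / n := by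
  have hn : 0 < n := hp.trans hpn
  have hnp : 0 < n - p := sub_pos.2 hpn
  calc 1 / (q + 1) ≤ 1 / (n * p / (n - p)) :=
        one_div_le_one_div_of_le (by positivity) (by linarith)
    _ = 1 / p - 1 / n := by field_simp

theorem le_add_one_of_sobolev_le {n p q : ℝ} (hp : 0 ≤ p) (hpn : p < n)
    (hq : n * p / (n - p) - 1 ≤ q) : p ≤ q + 1 := by
  have : p ≤ n * p / (n - p) := by
    rw [le_div_iff₀ (sub_pos.2 hpn)]
    nlinarith
  linarith

theorem statement_9_general {n : ℕ} (hn : n ≠ 0) {p q : ℝ} (hp : 1 < p) (hpq : p ≤ q + 1)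
    {ψ : ℝ → ℝ} (hψ : IsWarpingFunction ψ) (hK : ∀ r, 0 < r → Kfun n p q ψ r ≤ 0)
    (hpi : IntegrableOn (fun s : ℝ ↦ Theta n ψ s ^ (1 / (p - 1))) (Ioi (0 : ℝ)))
    {α : ℝ} {u : ℝ → ℝ} (hu : IsRadialSolution n p q ψ ⊤ α u) :
    StrictAntiOn u (Ici (0 : ℝ)) ∧
      ∃ lam : ℝ, α * exp (-(α ^ ((q + 1 - p) / (p - 1)) *
        ∫ s in Ioi (0 : ℝ), Theta n ψ s ^ (1 / (p - 1)))) ≤ lam ∧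
        Tendsto u atTop (𝓝 lam) := by
  have hanti : StrictAntiOn u (Ici 0) := radialInterval_top ▸ hu.strictAntiOn hψ hp
  have hα : 0 < α := hu.init ▸ hu.pos 0 le_rfl ENNReal.ofReal_lt_top
  refine ⟨hanti, exists_tendsto_atTop_of_antitoneOn_Ici hanti.antitoneOn fun r hr ↦ ?_⟩
  have hint : IntervalIntegrable (fun s ↦ Theta n ψ s ^ (1 / (p - 1))) volume 0 r :=
    (intervalIntegrable_iff_integrableOn_Ioc_of_le hr).2 (hpi.mono_set Ioc_subset_Ioi_self)
  have hle : ∫ s in (0 : ℝ)..r, Theta n ψ s ^ (1 / (p - 1)) ≤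
      ∫ s in Ioi (0 : ℝ), Theta n ψ s ^ (1 / (p - 1)) := by
    rw [intervalIntegral.integral_of_le hr]
    exact setIntegral_mono_set hpi (ae_restrict_of_forall_mem measurableSet_Ioi fun s hs ↦
      rpow_nonneg (hψ.Theta_pos n hs).le _) Ioc_subset_Ioi_self.eventuallyLE
  refine le_trans ?_ (hu.mul_exp_neg_integral_le hψ hn hp hpq hK ⟨hr, ENNReal.ofReal_lt_top⟩ hint)
  gcongr

end

/-- in the `p`-stochastically incomplete case, every global radial solution
is strictly decreasing and converges to a strictly positive limit. -/
theorem statement_9 (n : ℕ) (hn : 2 ≤ n) (p q : ℝ) (hp1 : 1 < p) (hpn : p < n)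
    (hq : (n : ℝ) * p / ((n : ℝ) - p) - 1 ≤ q)
    (ψ : ℝ → ℝ) (hψ : IsCHModel ψ)
    (hpi : IntegrableOn (fun s : ℝ => Theta n ψ s ^ (1 / (p - 1))) (Set.Ioi (0:ℝ)))
    (α : ℝ) (hα : 0 < α)
    (u : ℝ → ℝ) (hu : IsRadialSolution n p q ψ ⊤ α u) :
    StrictAntiOn u (Set.Ioi (0:ℝ)) ∧
      ∃ lam : ℝ, 0 < lam ∧ Tendsto u atTop (nhds lam) := by
  have hψ' := hψ.isWarpingFunction
  obtain ⟨hanti, lam, hlam, hlim⟩ := statement_9_general (by lia) hp1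
    (le_add_one_of_sobolev_le (by linarith) hpn hq) hψ'
    (fun _ ↦ hψ'.Kfun_nonpos hψ.2.1 hψ.convexOn (by linarith) (by lia)
      (one_div_add_one_le_of_sobolev_le (by linarith) hpn hq)) hpi hu
  exact ⟨hanti.mono Set.Ioi_subset_Ici_self, lam, lt_of_lt_of_le (by positivity) hlam, hlim⟩
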